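/- (Proposition: derivative of the two-risk ruin probability with respect to the loadings.) Let F₁, …, F₅ be distribution functions of probability measures on [0,∞) vanishing at 0, with compounding operators Ψⱼ = Ψ_{Fⱼ}, let Γ₁, …, Γ₅ : [0,∞) → ℝ be measurable and locally bounded, and let α : ℝ² → ℝ⁵, θ ↦ α(θ), be differentiable. For each θ let V_θ be the unique measurable locally bounded solution of V_θ = ⟨α(θ), Γ⟩ + ⟨α(θ), Ψ⟩ V_θ, i.e. V_θ(x) = Σ_{j=1}^5 αⱼ(θ)Γⱼ(x) + Σ_{j=1}^5 αⱼ(θ)(Ψⱼ V_θ)(x). Then for every x ≥ 0 the map θ ↦ V_θ(x) is differentiable and ∂V_θ(x)/∂θᵢ = Σ_{j=1}^5 u_{α(θ), Γⱼ + Ψⱼ V_θ}(x) · ∂αⱼ(θ)/∂θᵢ for i = 1, 2, where u_{γ,h} = Σ_{n=0}^∞ ⟨γ,Ψ⟩ⁿ h. -/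

import Mathlib

open MeasureTheory Set Filter

/-- The compounding operator `Ψ_F` associated with the probability measure `μ` on `[0,∞)`
(whose distribution function is `F`, so that `F(0) = 0` reads `μ (Iic 0) = 0`):
`(Ψ_F h)(x) = ∫₀ˣ (h(z) - ∫₀ᶻ h(z-y) dF(y)) dz`,
the inner integral being the Lebesgue–Stieltjes integral with respect to `F`. -/
noncomputable def Psi (μ : Measure ℝ) (h : ℝ → ℝ) : ℝ → ℝ :=
  fun x => ∫ z in (0:ℝ)..x, (h z - ∫ y in Icc (0:ℝ) z, h (z - y) ∂μ)

/-- `h : [0,∞) → ℝ` is locally bounded. -/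
def LocBdd (h : ℝ → ℝ) : Prop :=
  ∀ x : ℝ, ∃ M : ℝ, ∀ z ∈ Icc (0:ℝ) x, |h z| ≤ M

/-- `‖h‖_{[0,x]} = sup_{z ∈ [0,x]} |h z|`. -/
noncomputable def supNorm (h : ℝ → ℝ) (x : ℝ) : ℝ :=
  sSup ((fun z => |h z|) '' Icc (0:ℝ) x)

/-- The combined operator `⟨γ,Ψ⟩ h = Σ_{j=1}^5 γⱼ Ψⱼ h`. -/
noncomputable def PsiVec (μ : Fin 5 → Measure ℝ) (γ : Fin 5 → ℝ) (h : ℝ → ℝ) : ℝ → ℝ :=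
  fun x => ∑ j, γ j * Psi (μ j) h x

/-- `u_{γ,h}(x) = Σ_{n=0}^∞ (⟨γ,Ψ⟩ⁿ h)(x)`. -/
noncomputable def uSol (μ : Fin 5 → Measure ℝ) (γ : Fin 5 → ℝ) (h : ℝ → ℝ) : ℝ → ℝ :=
  fun x => ∑' n : ℕ, ((PsiVec μ γ)^[n] h) x

/-- The extension by zero to `ℝ` of the restriction of `h` to `[0,∞)` is measurable, and `h` is
locally bounded on `[0,∞)`. -/
def MeasLocBdd (h : ℝ → ℝ) : Prop :=
  Measurable ((Ici (0:ℝ)).indicator h) ∧ LocBdd h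

/-- The integrand in the definition of the compounding operator. -/
noncomputable def psiIntegrand (μ : Measure ℝ) (h : ℝ → ℝ) (z : ℝ) : ℝ :=
  h z - ∫ y in Icc (0:ℝ) z, h (z - y) ∂μ

lemma Psi_eq_integral_psiIntegrand (μ : Measure ℝ) (h : ℝ → ℝ) (x : ℝ) :
    Psi μ h x = ∫ z in (0:ℝ)..x, psiIntegrand μ h z := rfl

lemma psiIntegrand_congr {μ : Measure ℝ} {h g : ℝ → ℝ} (hg : ∀ z ≥ (0:ℝ), h z = g z)
    {z : ℝ} (hz : 0 ≤ z) : psiIntegrand μ h z = psiIntegrand μ g z := by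
  unfold psiIntegrand
  rw [hg z hz]
  congr 1
  refine setIntegral_congr_fun measurableSet_Icc fun y hy => hg _ ?_
  linarith [hy.2]

lemma Psi_congr {μ : Measure ℝ} {h g : ℝ → ℝ} (hg : ∀ z ≥ (0:ℝ), h z = g z)
    {x : ℝ} (hx : 0 ≤ x) : Psi μ h x = Psi μ g x := by
  refine intervalIntegral.integral_congr fun z hz => ?_
  rw [uIcc_of_le hx] at hz
  exact psiIntegrand_congr hg hz.1

lemma PsiVec_congr {μ : Fin 5 → Measure ℝ} {γ : Fin 5 → ℝ} {h g : ℝ → ℝ}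
    (hg : ∀ z ≥ (0:ℝ), h z = g z) {x : ℝ} (hx : 0 ≤ x) : PsiVec μ γ h x = PsiVec μ γ g x := by
  simp only [PsiVec, Psi_congr hg hx]

lemma iterate_PsiVec_congr {μ : Fin 5 → Measure ℝ} {γ : Fin 5 → ℝ} {h g : ℝ → ℝ}
    (hg : ∀ z ≥ (0:ℝ), h z = g z) (n : ℕ) :
    ∀ x ≥ (0:ℝ), ((PsiVec μ γ)^[n] h) x = ((PsiVec μ γ)^[n] g) x := by
  induction n with
  | zero => exact hg
  | succ n ih =>
    intro x hx
    rw [Function.iterate_succ_apply', Function.iterate_succ_apply']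
    exact PsiVec_congr ih hx

lemma Psi_const_mul {μ : Measure ℝ} (h : ℝ → ℝ) (c x : ℝ) :
    Psi μ (fun y => c * h y) x = c * Psi μ h x := by
  unfold Psi
  rw [← intervalIntegral.integral_const_mul]
  congr 1
  funext z
  rw [integral_const_mul]
  ring

lemma PsiVec_const_mul {μ : Fin 5 → Measure ℝ} (γ : Fin 5 → ℝ) (h : ℝ → ℝ) (c x : ℝ) :
    PsiVec μ γ (fun y => c * h y) x = c * PsiVec μ γ h x := by
  simp only [PsiVec, Psi_const_mul, Finset.mul_sum]
  exact Finset.sum_congr rfl fun j _ => by ring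

lemma iterate_PsiVec_const_mul {μ : Fin 5 → Measure ℝ} (γ : Fin 5 → ℝ) (h : ℝ → ℝ) (c : ℝ)
    (n : ℕ) :
    (PsiVec μ γ)^[n] (fun y => c * h y) = fun x => c * ((PsiVec μ γ)^[n] h) x := by
  induction n with
  | zero => rfl
  | succ n ih =>
    funext x
    simp only [Function.iterate_succ_apply', ih, PsiVec_const_mul]

lemma uSol_const_mul {μ : Fin 5 → Measure ℝ} (γ : Fin 5 → ℝ) (h : ℝ → ℝ) (c x : ℝ) :
    uSol μ γ (fun y => c * h y) x = c * uSol μ γ h x := by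
  simp only [uSol, iterate_PsiVec_const_mul, tsum_mul_left]

lemma MeasLocBdd.of_measurable {h : ℝ → ℝ} (hm : Measurable h) (hb : LocBdd h) :
    MeasLocBdd h := ⟨hm.indicator measurableSet_Ici, hb⟩

lemma MeasLocBdd.add {h g : ℝ → ℝ} (hh : MeasLocBdd h) (hg : MeasLocBdd g) :
    MeasLocBdd (fun x => h x + g x) := by
  refine ⟨?_, fun x => ?_⟩
  · have := hh.1.add hg.1
    rwa [← indicator_add'] at this
  · obtain ⟨M, hM⟩ := hh.2 x
    obtain ⟨N, hN⟩ := hg.2 x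
    exact ⟨M + N, fun z hz => (abs_add_le _ _).trans (add_le_add (hM z hz) (hN z hz))⟩

lemma MeasLocBdd.const_mul {h : ℝ → ℝ} (hh : MeasLocBdd h) (c : ℝ) :
    MeasLocBdd (fun x => c * h x) := by
  refine ⟨?_, fun x => ?_⟩
  · have heq : (Ici (0:ℝ)).indicator (fun x => c * h x)
        = fun x => c * (Ici (0:ℝ)).indicator h x := funext fun x => indicator_const_mul _ _ _ _
    rw [heq]
    exact hh.1.const_mul c
  · obtain ⟨M, hM⟩ := hh.2 x
    refine ⟨|c| * M, fun z hz => ?_⟩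
    rw [abs_mul]
    exact mul_le_mul_of_nonneg_left (hM z hz) (abs_nonneg c)

lemma measLocBdd_zero : MeasLocBdd (fun _ => 0) :=
  .of_measurable measurable_const fun _ => ⟨0, by simp⟩

lemma MeasLocBdd.sum {ι : Type*} (s : Finset ι) {h : ι → ℝ → ℝ} (hh : ∀ j, MeasLocBdd (h j)) :
    MeasLocBdd (fun x => ∑ j ∈ s, h j x) := by
  classical
  induction s using Finset.induction_on with
  | empty => simpa using measLocBdd_zero
  | insert a s ha ih =>
    simp only [Finset.sum_insert ha]
    exact (hh a).add ih

section
variable {μ : Measure ℝ} [IsProbabilityMeasure μ]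

lemma abs_setIntegral_comp_sub_le {h : ℝ → ℝ} {z M : ℝ} (hz : 0 ≤ z)
    (hM : ∀ w ∈ Icc (0:ℝ) z, |h w| ≤ M) : |∫ y in Icc (0:ℝ) z, h (z - y) ∂μ| ≤ M := by
  have hM0 : 0 ≤ M := (abs_nonneg _).trans (hM 0 ⟨le_rfl, hz⟩)
  have := norm_setIntegral_le_of_norm_le_const (μ := μ) (s := Icc (0:ℝ) z)
    (f := fun y => h (z - y)) (C := M) (measure_lt_top _ _)
    (fun y hy => hM _ ⟨by linarith [hy.2], by linarith [hy.1]⟩)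
  rw [Real.norm_eq_abs] at this
  exact this.trans (mul_le_of_le_one_right hM0 measureReal_le_one)

lemma abs_psiIntegrand_le {h : ℝ → ℝ} {z M : ℝ} (hz : 0 ≤ z)
    (hM : ∀ w ∈ Icc (0:ℝ) z, |h w| ≤ M) : |psiIntegrand μ h z| ≤ 2 * M := by
  have h1 := abs_setIntegral_comp_sub_le (μ := μ) hz hM
  have h2 := hM z ⟨hz, le_rfl⟩
  have h3 := abs_sub (h z) (∫ y in Icc (0:ℝ) z, h (z - y) ∂μ)
  unfold psiIntegrand
  linarith

/-- One application of the compounding operator raises the order of vanishing at `0` by one. -/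
lemma abs_Psi_le {h : ℝ → ℝ} {T C : ℝ} (n : ℕ) (hC : 0 ≤ C)
    (hh : ∀ z ∈ Icc (0:ℝ) T, |h z| ≤ C * (z ^ n / n.factorial)) {x : ℝ} (hx : x ∈ Icc (0:ℝ) T) :
    |Psi μ h x| ≤ 2 * C * (x ^ (n + 1) / (n + 1).factorial) := by
  have key : ∀ z ∈ Ioc (0:ℝ) x, ‖psiIntegrand μ h z‖ ≤ 2 * (C * (z ^ n / n.factorial)) := by
    intro z hz
    refine abs_psiIntegrand_le hz.1.le fun w hw => ?_
    refine (hh w ⟨hw.1, hw.2.trans (hz.2.trans hx.2)⟩).trans ?_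
    have := hw.1
    have := hw.2
    gcongr
  have hle := intervalIntegral.norm_integral_le_of_norm_le (μ := volume) hx.1
    (f := psiIntegrand μ h) (g := fun z => 2 * (C * (z ^ n / n.factorial)))
    (Eventually.of_forall key) (Continuous.intervalIntegrable (by fun_prop) _ _)
  rw [Real.norm_eq_abs, ← Psi_eq_integral_psiIntegrand] at hle
  refine hle.trans_eq ?_
  simp only [intervalIntegral.integral_const_mul, intervalIntegral.integral_div, integral_pow]
  rw [Nat.factorial_succ]
  push_cast
  field_simp
  simp

lemma measurable_psiIntegrand {h : ℝ → ℝ} (hm : Measurable h) (h0 : ∀ z < 0, h z = 0) :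
    Measurable (psiIntegrand μ h) := by
  have heq : psiIntegrand μ h = fun z => h z - ∫ y in Ici (0:ℝ), h (z - y) ∂μ := by
    funext z
    unfold psiIntegrand
    congr 1
    refine (setIntegral_eq_of_subset_of_forall_sdiff_eq_zero measurableSet_Ici
      Icc_subset_Ici_self fun y hy => h0 _ ?_).symm
    have : z < y := by
      by_contra hcon
      exact hy.2 ⟨hy.1, not_lt.mp hcon⟩
    linarith
  rw [heq]
  refine hm.sub (StronglyMeasurable.integral_prod_right' (ν := μ.restrict (Ici 0))
    (f := fun p : ℝ × ℝ => h (p.1 - p.2)) ?_).measurable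
  exact (hm.comp (measurable_fst.sub measurable_snd)).stronglyMeasurable

lemma intervalIntegrable_psiIntegrand_indicator {h : ℝ → ℝ} (hh : MeasLocBdd h) (a b : ℝ) :
    IntervalIntegrable (psiIntegrand μ ((Ici (0:ℝ)).indicator h)) volume a b := by
  have hneg : ∀ z < 0, (Ici (0:ℝ)).indicator h z = 0 := fun z hz =>
    indicator_of_notMem (by simpa using hz) _
  obtain ⟨M, hM⟩ := hh.2 (max a b)
  refine (intervalIntegrable_const (c := 2 * |M|)).mono_fun'
    (measurable_psiIntegrand hh.1 hneg).aestronglyMeasurable ?_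
  refine (ae_restrict_iff' measurableSet_uIoc).2 (Eventually.of_forall fun z hz => ?_)
  change |psiIntegrand μ _ z| ≤ 2 * |M|
  rcases lt_or_ge z 0 with hz0 | hz0
  · simp [psiIntegrand, hneg z hz0, Icc_eq_empty (not_le.mpr hz0)]
  · refine abs_psiIntegrand_le hz0 fun w hw => ?_
    rw [indicator_of_mem (by exact hw.1)]
    exact (hM w ⟨hw.1, hw.2.trans hz.2⟩).trans (le_abs_self M)

lemma intervalIntegrable_psiIntegrand {h : ℝ → ℝ} (hh : MeasLocBdd h) {x : ℝ} (hx : 0 ≤ x) :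
    IntervalIntegrable (psiIntegrand μ h) volume 0 x := by
  refine (intervalIntegrable_psiIntegrand_indicator (μ := μ) hh 0 x).congr fun z hz => ?_
  rw [uIoc_of_le hx] at hz
  exact psiIntegrand_congr (fun w hw => indicator_of_mem (by exact hw) _) hz.1.le

lemma integrableOn_comp_sub {h : ℝ → ℝ} (hh : MeasLocBdd h) (z : ℝ) :
    IntegrableOn (fun y => h (z - y)) (Icc 0 z) μ := by
  obtain ⟨M, hM⟩ := hh.2 z
  have h1 : IntegrableOn (fun y => (Ici (0:ℝ)).indicator h (z - y)) (Icc 0 z) μ := by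
    refine IntegrableOn.of_bound (measure_lt_top _ _)
      (hh.1.comp (measurable_const.sub measurable_id)).aestronglyMeasurable M ?_
    refine (ae_restrict_iff' measurableSet_Icc).2 (Eventually.of_forall fun y hy => ?_)
    rw [indicator_of_mem (by simpa using hy.2)]
    exact hM _ ⟨by linarith [hy.2], by linarith [hy.1]⟩
  refine h1.congr_fun (fun y hy => ?_) measurableSet_Icc
  exact indicator_of_mem (by simpa using hy.2) _

lemma Psi_add {h g : ℝ → ℝ} (hh : MeasLocBdd h) (hg : MeasLocBdd g) {x : ℝ} (hx : 0 ≤ x) :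
    Psi μ (fun y => h y + g y) x = Psi μ h x + Psi μ g x := by
  simp only [Psi_eq_integral_psiIntegrand]
  rw [← intervalIntegral.integral_add (intervalIntegrable_psiIntegrand hh hx)
    (intervalIntegrable_psiIntegrand hg hx)]
  congr 1
  funext z
  unfold psiIntegrand
  rw [integral_add (integrableOn_comp_sub hh z) (integrableOn_comp_sub hg z)]
  ring

lemma MeasLocBdd.Psi {h : ℝ → ℝ} (hh : MeasLocBdd h) : MeasLocBdd (Psi μ h) := by
  constructor
  · have hcont : Continuous (_root_.Psi μ ((Ici (0:ℝ)).indicator h)) :=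
      intervalIntegral.continuous_primitive
        (intervalIntegrable_psiIntegrand_indicator (μ := μ) hh) 0
    have heq : (Ici (0:ℝ)).indicator (_root_.Psi μ h)
        = (Ici (0:ℝ)).indicator (_root_.Psi μ ((Ici (0:ℝ)).indicator h)) :=
      indicator_congr fun x hx => Psi_congr
        (fun z hz => (indicator_of_mem (by exact hz) _).symm) hx
    rw [heq]
    exact hcont.measurable.indicator measurableSet_Ici
  · intro x
    obtain ⟨M, hM⟩ := hh.2 x
    refine ⟨2 * |M| * x, fun z hz => ?_⟩
    have h1 := abs_Psi_le (μ := μ) (h := h) (T := x) 0 (abs_nonneg M)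
      (fun w hw => by simpa using (hM w hw).trans (le_abs_self M)) hz
    simp only [zero_add, pow_one, Nat.factorial_one, Nat.cast_one, div_one] at h1
    exact h1.trans (mul_le_mul_of_nonneg_left hz.2 (by positivity))

end

section
variable {μ : Fin 5 → Measure ℝ} [∀ j, IsProbabilityMeasure (μ j)]

lemma MeasLocBdd.PsiVec {h : ℝ → ℝ} (hh : MeasLocBdd h) (γ : Fin 5 → ℝ) :
    MeasLocBdd (PsiVec μ γ h) :=
  MeasLocBdd.sum Finset.univ fun j => (hh.Psi (μ := μ j)).const_mul (γ j)

lemma MeasLocBdd.iterate_PsiVec {h : ℝ → ℝ} (hh : MeasLocBdd h) (γ : Fin 5 → ℝ) (n : ℕ) :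
    MeasLocBdd ((_root_.PsiVec μ γ)^[n] h) := by
  induction n with
  | zero => exact hh
  | succ n ih =>
    rw [Function.iterate_succ_apply']
    exact ih.PsiVec γ

lemma PsiVec_add {h g : ℝ → ℝ} (γ : Fin 5 → ℝ) (hh : MeasLocBdd h) (hg : MeasLocBdd g)
    {x : ℝ} (hx : 0 ≤ x) :
    PsiVec μ γ (fun y => h y + g y) x = PsiVec μ γ h x + PsiVec μ γ g x := by
  simp only [PsiVec, Psi_add hh hg hx, mul_add, Finset.sum_add_distrib]

lemma iterate_PsiVec_add {h g : ℝ → ℝ} (γ : Fin 5 → ℝ) (hh : MeasLocBdd h) (hg : MeasLocBdd g)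
    (n : ℕ) : ∀ x ≥ (0:ℝ), ((PsiVec μ γ)^[n] fun y => h y + g y) x
      = ((PsiVec μ γ)^[n] h) x + ((PsiVec μ γ)^[n] g) x := by
  induction n with
  | zero => exact fun _ _ => rfl
  | succ n ih =>
    intro x hx
    simp only [Function.iterate_succ_apply']
    rw [PsiVec_congr ih hx, PsiVec_add γ (hh.iterate_PsiVec γ n) (hg.iterate_PsiVec γ n) hx]

lemma abs_PsiVec_le (γ : Fin 5 → ℝ) {h : ℝ → ℝ} {T C : ℝ} (n : ℕ) (hC : 0 ≤ C)
    (hh : ∀ z ∈ Icc (0:ℝ) T, |h z| ≤ C * (z ^ n / n.factorial)) {x : ℝ} (hx : x ∈ Icc (0:ℝ) T) :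
    |PsiVec μ γ h x| ≤ 2 * (∑ j, |γ j|) * C * (x ^ (n + 1) / (n + 1).factorial) := by
  calc |PsiVec μ γ h x| ≤ ∑ j, |γ j * Psi (μ j) h x| := Finset.abs_sum_le_sum_abs _ _
    _ ≤ ∑ j, |γ j| * (2 * C * (x ^ (n + 1) / (n + 1).factorial)) := by
        refine Finset.sum_le_sum fun j _ => ?_
        rw [abs_mul]
        exact mul_le_mul_of_nonneg_left (abs_Psi_le n hC hh hx) (abs_nonneg _)
    _ = _ := by rw [← Finset.sum_mul]; ring

lemma abs_iterate_PsiVec_le (γ : Fin 5 → ℝ) {h : ℝ → ℝ} {T C : ℝ}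
    (hh : ∀ z ∈ Icc (0:ℝ) T, |h z| ≤ C) (n : ℕ) :
    ∀ x ∈ Icc (0:ℝ) T, |((PsiVec μ γ)^[n] h) x|
      ≤ (2 * ∑ j, |γ j|) ^ n * C * (x ^ n / n.factorial) := by
  induction n with
  | zero => simpa using hh
  | succ n ih =>
    intro x hx
    have hC : 0 ≤ C := (abs_nonneg _).trans (hh x hx)
    rw [Function.iterate_succ_apply']
    refine (abs_PsiVec_le γ n (by positivity) ih hx).trans_eq ?_
    ring

lemma hasSum_exp_bound (A C x : ℝ) :
    HasSum (fun n : ℕ => A ^ n * C * (x ^ n / n.factorial)) (C * Real.exp (A * x)) := by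
  have h1 : HasSum (fun n : ℕ => (A * x) ^ n / n.factorial) (Real.exp (A * x)) := by
    rw [Real.exp_eq_exp_ℝ]
    exact NormedSpace.expSeries_div_hasSum_exp _
  refine (h1.mul_left C).congr_fun fun n => ?_
  rw [mul_pow]
  ring

lemma summable_iterate_PsiVec (γ : Fin 5 → ℝ) {h : ℝ → ℝ} (hh : LocBdd h) {x : ℝ} (hx : 0 ≤ x) :
    Summable fun n : ℕ => ((PsiVec μ γ)^[n] h) x := by
  obtain ⟨C, hC⟩ := hh x
  exact .of_norm_bounded (hasSum_exp_bound (2 * ∑ j, |γ j|) C x).summable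
    fun n => abs_iterate_PsiVec_le γ hC n x ⟨hx, le_rfl⟩

lemma abs_uSol_le (γ : Fin 5 → ℝ) {h : ℝ → ℝ} {T C : ℝ}
    (hh : ∀ z ∈ Icc (0:ℝ) T, |h z| ≤ C) {x : ℝ} (hx : x ∈ Icc (0:ℝ) T) :
    |uSol μ γ h x| ≤ C * Real.exp (2 * (∑ j, |γ j|) * x) :=
  tsum_of_norm_bounded (f := fun n => ((PsiVec μ γ)^[n] h) x)
    (hasSum_exp_bound (2 * ∑ j, |γ j|) C x) fun n => abs_iterate_PsiVec_le γ hh n x hx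

lemma uSol_add {h g : ℝ → ℝ} (γ : Fin 5 → ℝ) (hh : MeasLocBdd h) (hg : MeasLocBdd g)
    {x : ℝ} (hx : 0 ≤ x) :
    uSol μ γ (fun y => h y + g y) x = uSol μ γ h x + uSol μ γ g x := by
  simp only [uSol]
  rw [← (summable_iterate_PsiVec γ hh.2 hx).tsum_add (summable_iterate_PsiVec γ hg.2 hx)]
  exact tsum_congr fun n => iterate_PsiVec_add γ hh hg n x hx

lemma uSol_sum {ι : Type*} (s : Finset ι) (γ : Fin 5 → ℝ) (c : ι → ℝ) {h : ι → ℝ → ℝ}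
    (hh : ∀ j, MeasLocBdd (h j)) {x : ℝ} (hx : 0 ≤ x) :
    uSol μ γ (fun y => ∑ j ∈ s, c j * h j y) x = ∑ j ∈ s, c j * uSol μ γ (h j) x := by
  classical
  induction s using Finset.induction_on with
  | empty =>
    have := uSol_const_mul (μ := μ) γ (fun _ => 0) 0 x
    simpa using this
  | insert a s ha ih =>
    simp only [Finset.sum_insert ha]
    rw [uSol_add γ ((hh a).const_mul _) (MeasLocBdd.sum s fun j => (hh j).const_mul _) hx,
      uSol_const_mul, ih]

/-- A locally bounded solution of `D = g + ⟨γ,Ψ⟩ D` is given by the Neumann series `u_{γ,g}`. -/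
lemma eq_uSol (γ : Fin 5 → ℝ) {D g : ℝ → ℝ} (hD : MeasLocBdd D) (hg : MeasLocBdd g)
    (heq : ∀ x ≥ (0:ℝ), D x = g x + PsiVec μ γ D x) {x : ℝ} (hx : 0 ≤ x) :
    D x = uSol μ γ g x := by
  have hstep : ∀ n : ℕ, ((PsiVec μ γ)^[n] D) x - ((PsiVec μ γ)^[n + 1] D) x
      = ((PsiVec μ γ)^[n] g) x := by
    intro n
    rw [iterate_PsiVec_congr heq n x hx, iterate_PsiVec_add γ hg (hD.PsiVec γ) n x hx,
      Function.iterate_succ_apply]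
    ring
  have h0 := (summable_iterate_PsiVec (μ := μ) γ hD.2 hx).tendsto_atTop_zero
  have h1 := (summable_iterate_PsiVec (μ := μ) γ hg.2 hx).hasSum.tendsto_sum_nat
  have h2 : Tendsto (fun N : ℕ => ∑ n ∈ Finset.range N, ((PsiVec μ γ)^[n] g) x) atTop
      (nhds (D x - 0)) := by
    refine (h0.const_sub (D x)).congr fun N => ?_
    rw [← Finset.sum_congr rfl fun n _ => hstep n,
      Finset.sum_range_sub' fun n => ((PsiVec μ γ)^[n] D) x]
    rfl
  rw [sub_zero] at h2
  exact tendsto_nhds_unique h2 h1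

/-- First-order expansion, with quadratic remainder, of the solution of
`V = ⟨γ,Γ⟩ + ⟨γ,Ψ⟩ V` as a function of the parameter `γ`. -/
lemma abs_sub_linearization_le {Γ : Fin 5 → ℝ → ℝ} (hΓ : ∀ j, MeasLocBdd (Γ j))
    {γ γ' : Fin 5 → ℝ} {V V' : ℝ → ℝ} (hV : MeasLocBdd V) (hV' : MeasLocBdd V')
    (hVeq : ∀ x ≥ (0:ℝ), V x = (∑ j, γ j * Γ j x) + PsiVec μ γ V x)
    (hVeq' : ∀ x ≥ (0:ℝ), V' x = (∑ j, γ' j * Γ j x) + PsiVec μ γ' V' x)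
    {x B : ℝ} (hx : 0 ≤ x) (hB : ∀ j, ∀ z ∈ Icc (0:ℝ) x, |Γ j z + Psi (μ j) V z| ≤ B) :
    |V' x - V x - ∑ j, (γ' j - γ j) * uSol μ γ (fun y => Γ j y + Psi (μ j) V y) x|
      ≤ (2 * x * B * Real.exp (2 * (∑ j, |γ' j|) * x) * Real.exp (2 * (∑ j, |γ j|) * x)
          * ∑ j, |γ' j - γ j|) * ∑ j, |γ' j - γ j| := by
  set δ : Fin 5 → ℝ := fun j => γ' j - γ j with hδ
  set s : ℝ := ∑ j, |δ j| with hs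
  have hs0 : 0 ≤ s := Finset.sum_nonneg fun j _ => abs_nonneg _
  have hB0 : 0 ≤ B := (abs_nonneg _).trans (hB 0 0 ⟨le_rfl, hx⟩)
  set H : Fin 5 → ℝ → ℝ := fun j y => Γ j y + Psi (μ j) V y with hH
  have hHm : ∀ j, MeasLocBdd (H j) := fun j => (hΓ j).add hV.Psi
  set f : ℝ → ℝ := fun y => ∑ j, δ j * H j y with hf
  have hfm : MeasLocBdd f := MeasLocBdd.sum _ fun j => (hHm j).const_mul _
  set D : ℝ → ℝ := fun y => V' y + (-1) * V y with hDdef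
  have hDm : MeasLocBdd D := hV'.add (hV.const_mul _)
  have hPsiD : ∀ j, ∀ z ≥ (0:ℝ), Psi (μ j) D z = Psi (μ j) V' z - Psi (μ j) V z := by
    intro j z hz
    rw [hDdef, Psi_add hV' (hV.const_mul _) hz, Psi_const_mul]
    ring
  have hD' : ∀ z ≥ (0:ℝ), D z = f z + PsiVec μ γ' D z := by
    intro z hz
    simp only [PsiVec, hPsiD _ z hz, hf, hH, hδ]
    simp only [hDdef, hVeq z hz, hVeq' z hz, PsiVec, Fin.sum_univ_five]
    ring
  have hD : ∀ z ≥ (0:ℝ), D z = (f z + PsiVec μ δ D z) + PsiVec μ γ D z := by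
    intro z hz
    rw [hD' z hz]
    simp only [PsiVec, hδ, sub_mul, Finset.sum_sub_distrib]
    ring
  have hfB : ∀ z ∈ Icc (0:ℝ) x, |f z| ≤ s * B := by
    intro z hz
    refine (Finset.abs_sum_le_sum_abs _ _).trans ?_
    rw [hs, Finset.sum_mul]
    refine Finset.sum_le_sum fun j _ => ?_
    rw [abs_mul]
    exact mul_le_mul_of_nonneg_left (hB j z hz) (abs_nonneg _)
  have hDB : ∀ z ∈ Icc (0:ℝ) x, |D z| ≤ s * B * Real.exp (2 * (∑ j, |γ' j|) * x) := by
    intro z hz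
    rw [eq_uSol γ' hDm hfm hD' hz.1]
    refine (abs_uSol_le γ' hfB hz).trans ?_
    have := hz.2
    gcongr
  set E := s * B * Real.exp (2 * (∑ j, |γ' j|) * x) with hE
  have hE0 : 0 ≤ E := by positivity
  have heB : ∀ z ∈ Icc (0:ℝ) x, |PsiVec μ δ D z| ≤ 2 * s * E * x := by
    intro z hz
    have h1 := abs_PsiVec_le (μ := μ) δ (h := D) 0 hE0 (fun w hw => by simpa using hDB w hw) hz
    simp only [zero_add, pow_one, Nat.factorial_one, Nat.cast_one, div_one] at h1
    exact h1.trans (mul_le_mul_of_nonneg_left hz.2 (by positivity))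
  have hDx : V' x - V x = (∑ j, δ j * uSol μ γ (H j) x) + uSol μ γ (PsiVec μ δ D) x := by
    rw [← uSol_sum Finset.univ γ δ hHm hx, ← uSol_add γ hfm (hDm.PsiVec δ) hx,
      ← eq_uSol γ hDm (hfm.add (hDm.PsiVec δ)) hD hx]
    simp only [hDdef]
    ring
  rw [hDx, add_sub_cancel_left]
  refine (abs_uSol_le γ heB ⟨hx, le_rfl⟩).trans_eq ?_
  rw [hE]
  ring

end

/-- derivative of the two-risk ruin probability with respect to the loadings:
if `θ ↦ α(θ)` is differentiable and, for each `θ`, `V_θ` is the (unique) measurable locally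
bounded solution of `V_θ = ⟨α(θ),Γ⟩ + ⟨α(θ),Ψ⟩V_θ` on `[0,∞)`, then for every `x ≥ 0` the
map `θ ↦ V_θ(x)` is differentiable and
`∂V_θ(x)/∂θᵢ = Σ_{j=1}^5 u_{α(θ), Γⱼ + Ψⱼ V_θ}(x) ∂αⱼ(θ)/∂θᵢ`. -/
theorem two_risk_ruin_loading_deriv
    (μ : Fin 5 → Measure ℝ) [∀ j, IsProbabilityMeasure (μ j)]
    (hμ0 : ∀ j, μ j (Iic 0) = 0)
    (Γ : Fin 5 → ℝ → ℝ) (hΓmeas : ∀ j, Measurable (Γ j)) (hΓbdd : ∀ j, LocBdd (Γ j))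
    (α : (Fin 2 → ℝ) → Fin 5 → ℝ) (hα : Differentiable ℝ α)
    (V : (Fin 2 → ℝ) → ℝ → ℝ)
    (hV : ∀ θ : Fin 2 → ℝ, Measurable (V θ) ∧ LocBdd (V θ) ∧
      ∀ x ≥ (0:ℝ), V θ x = (∑ j, α θ j * Γ j x) + ∑ j, α θ j * Psi (μ j) (V θ) x) :
    ∀ x ≥ (0:ℝ), ∀ θ : Fin 2 → ℝ,
      DifferentiableAt ℝ (fun θ' => V θ' x) θ ∧
      ∀ i : Fin 2, fderiv ℝ (fun θ' => V θ' x) θ (Pi.single i 1) =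
        ∑ j, uSol μ (α θ) (fun y => Γ j y + Psi (μ j) (V θ) y) x *
          fderiv ℝ α θ (Pi.single i 1) j := by
  intro x hx θ
  have hΓ : ∀ j, MeasLocBdd (Γ j) := fun j => .of_measurable (hΓmeas j) (hΓbdd j)
  have hVm : ∀ θ, MeasLocBdd (V θ) := fun θ => .of_measurable (hV θ).1 (hV θ).2.1
  have hbd : ∀ j, ∃ M, ∀ z ∈ Icc (0:ℝ) x, |Γ j z + Psi (μ j) (V θ) z| ≤ M := fun j =>
    ((hΓ j).add (hVm θ).Psi).2 x
  choose M hM using hbd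
  have hB : ∀ j, ∀ z ∈ Icc (0:ℝ) x, |Γ j z + Psi (μ j) (V θ) z| ≤ ∑ j, |M j| := fun j z hz =>
    (hM j z hz).trans ((le_abs_self _).trans
      (Finset.single_le_sum (f := fun j => |M j|) (fun _ _ => abs_nonneg _) (Finset.mem_univ j)))
  set B := ∑ j, |M j|
  set w : Fin 5 → ℝ := fun j => uSol μ (α θ) (fun y => Γ j y + Psi (μ j) (V θ) y) x with hw
  have hαj : ∀ j, HasFDerivAt (fun θ' => α θ' j)
      ((ContinuousLinearMap.proj j).comp (fderiv ℝ α θ)) θ := fun j =>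
    hasFDerivAt_pi'.1 (hα θ).hasFDerivAt j
  set s : (Fin 2 → ℝ) → ℝ := fun θ' => ∑ j, |α θ' j - α θ j| with hs
  have hsO : s =O[nhds θ] fun θ' => θ' - θ :=
    Asymptotics.IsBigO.fun_sum fun j _ => (hαj j).isBigO_sub.norm_left
  set φ : (Fin 2 → ℝ) → ℝ := fun θ' =>
    2 * x * B * Real.exp (2 * (∑ j, |α θ' j|) * x) * Real.exp (2 * (∑ j, |α θ j|) * x) * s θ'
    with hφ
  have hφ0 : Tendsto φ (nhds θ) (nhds 0) := by
    have hαc := hα.continuous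
    have hc : Continuous φ := by
      simp only [hφ, hs]
      fun_prop
    have h0 : φ θ = 0 := by simp [hφ, hs]
    exact h0 ▸ hc.tendsto θ
  have hlin : HasFDerivAt (fun θ' => ∑ j, w j * α θ' j)
      (∑ j, w j • (ContinuousLinearMap.proj j).comp (fderiv ℝ α θ)) θ :=
    HasFDerivAt.fun_sum fun j _ => (hαj j).const_mul (w j)
  have hrem : HasFDerivAt (fun θ' => V θ' x - ∑ j, w j * α θ' j)
      (0 : (Fin 2 → ℝ) →L[ℝ] ℝ) θ := by
    refine HasFDerivAt.of_isLittleO ?_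
    have hlo : (fun θ' => φ θ' * s θ') =o[nhds θ] fun θ' => θ' - θ := by
      have h1 := ((Asymptotics.isLittleO_one_iff ℝ).2 hφ0).mul_isBigO hsO.norm_right
      simp only [one_mul] at h1
      exact h1.of_norm_right
    refine Asymptotics.IsBigO.trans_isLittleO (Asymptotics.isBigO_of_le _ fun θ' => ?_) hlo
    have h2 := abs_sub_linearization_le hΓ (hVm θ) (hVm θ') (hV θ).2.2 (hV θ').2.2 hx hB
    rw [Real.norm_eq_abs, Real.norm_eq_abs]
    refine le_trans (le_of_eq ?_) (h2.trans (le_abs_self _))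
    congr 1
    simp only [_root_.zero_apply, sub_mul, Finset.sum_sub_distrib, hw, mul_comm]
    ring
  have hder := hrem.add hlin
  rw [zero_add] at hder
  have hfun : ((fun θ' => V θ' x - ∑ j, w j * α θ' j) + fun θ' => ∑ j, w j * α θ' j)
      = fun θ' => V θ' x := by
    funext θ'
    simp
  rw [hfun] at hder
  refine ⟨hder.differentiableAt, fun i => ?_⟩
  rw [hder.fderiv]
  simp [hw]
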